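/- Classification of solutions of the rank-one separation-of-variables system (Appendix B, n = 2 case): let N ≥ 1, η ∈ ℂ, k₁ ∈ ℂ with k₁ ≠ 0, and ξ₁, …, ξ_N ∈ ℂ such that the 2N complex numbers ξ_a − hη (a ∈ {1, …, N}, h ∈ {0, 1}) are pairwise distinct. Then a polynomial t ∈ ℂ[X] of degree N with leading coefficient k₁ satisfies t(ξ_a) · t(ξ_a − η) = 0 for all a ∈ {1, …, N} if and only if there exists h = (h₁, …, h_N) ∈ {0,1}^N such that t = k₁ ∏_{a=1}^{N} (X − (ξ_a − h_a η)); moreover the map h ↦ k₁ ∏_{a=1}^{N} (X − (ξ_a − h_a η)) is injective on {0,1}^N, so this system has exactly 2^N solutions. -/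

import Mathlib

open Polynomial BigOperators

/-- classification of the solutions of the rank-one separation of
variables system: a degree-`N` polynomial with leading coefficient `k₁`
satisfies `t(ξ_a) t(ξ_a − η) = 0` for all `a` iff it is of the form
`k₁ ∏_a (X − (ξ_a − h_a η))` for some `h ∈ {0,1}^N`; the parametrization is
injective, so there are exactly `2^N` solutions. -/
theorem rank_one_sov_system_classification (N : ℕ) (hN : 1 ≤ N) (η k₁ : ℂ)
    (hk : k₁ ≠ 0) (ξ : Fin N → ℂ)
    (hdist : Function.Injective fun z : Fin N × Fin 2 => ξ z.1 - ((z.2 : ℕ) : ℂ) * η) :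
    (∀ t : Polynomial ℂ,
      (t.natDegree = N ∧ t.leadingCoeff = k₁ ∧
          ∀ a : Fin N, t.eval (ξ a) * t.eval (ξ a - η) = 0)
        ↔ ∃ h : Fin N → Fin 2,
            t = C k₁ * ∏ a : Fin N, (X - C (ξ a - ((h a : ℕ) : ℂ) * η)))
    ∧ Function.Injective fun h : Fin N → Fin 2 =>
        C k₁ * ∏ a : Fin N, (X - C (ξ a - ((h a : ℕ) : ℂ) * η)) := by
  have hmonic : ∀ h : Fin N → Fin 2,
      (∏ a : Fin N, (X - C (ξ a - ((h a : ℕ) : ℂ) * η))).Monic := fun h =>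
    monic_prod_of_monic _ _ fun a _ => monic_X_sub_C _
  have hdeg : ∀ h : Fin N → Fin 2,
      (∏ a : Fin N, (X - C (ξ a - ((h a : ℕ) : ℂ) * η))).natDegree = N := by
    intro h
    rw [natDegree_prod_of_monic _ _ fun a _ => monic_X_sub_C _]
    simp only [natDegree_X_sub_C]
    simp
  refine ⟨fun t => ⟨?_, ?_⟩, ?_⟩
  · rintro ⟨h1, h2, h3⟩
    have key : ∀ a : Fin N, ∃ b : Fin 2, t.eval (ξ a - ((b : ℕ) : ℂ) * η) = 0 := by
      intro a
      rcases mul_eq_zero.1 (h3 a) with h | h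
      · exact ⟨0, by simpa using h⟩
      · exact ⟨1, by simpa using h⟩
    choose h hh using key
    refine ⟨h, ?_⟩
    have hdvd : (∏ a : Fin N, (X - C (ξ a - ((h a : ℕ) : ℂ) * η))) ∣ t := by
      apply Finset.prod_dvd_of_coprime
      · intro a _ b _ hab
        refine pairwise_coprime_X_sub_C (s := fun a => ξ a - ((h a : ℕ) : ℂ) * η) ?_ hab
        intro a b e
        have := @hdist (a, h a) (b, h b) e
        exact congrArg Prod.fst this
      · intro a _
        exact dvd_iff_isRoot.2 (hh a)
    have := eq_leadingCoeff_mul_of_monic_of_dvd_of_natDegree_le (hmonic h) hdvd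
      (by rw [hdeg h, h1])
    rwa [h2] at this
  · rintro ⟨h, rfl⟩
    refine ⟨?_, ?_, ?_⟩
    · rw [natDegree_C_mul hk, hdeg h]
    · rw [leadingCoeff_mul, leadingCoeff_C, (hmonic h).leadingCoeff, mul_one]
    · intro a
      have hz : (C k₁ * ∏ a : Fin N, (X - C (ξ a - ((h a : ℕ) : ℂ) * η))).eval
          (ξ a - ((h a : ℕ) : ℂ) * η) = 0 := by
        rw [eval_mul, eval_prod, Finset.prod_eq_zero (Finset.mem_univ a), mul_zero]
        simp
      have hc : h a = 0 ∨ h a = 1 := by omega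
      rcases hc with hc | hc
      · rw [hc] at hz
        have e : ξ a - (((0 : Fin 2) : ℕ) : ℂ) * η = ξ a := by simp
        rw [e] at hz
        rw [hz, zero_mul]
      · rw [hc] at hz
        have e : ξ a - (((1 : Fin 2) : ℕ) : ℂ) * η = ξ a - η := by simp
        rw [e] at hz
        rw [hz, mul_zero]
  · intro h h' e
    have e' := mul_left_cancel₀ (C_ne_zero.2 hk) e
    funext a
    have hz := congrArg (eval (ξ a - ((h a : ℕ) : ℂ) * η)) e'
    rw [eval_prod, eval_prod, Finset.prod_eq_zero (Finset.mem_univ a) (by simp)] at hz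
    obtain ⟨b, _, hb⟩ := Finset.prod_eq_zero_iff.1 hz.symm
    rw [eval_sub, eval_X, eval_C, sub_eq_zero] at hb
    have := @hdist (a, h a) (b, h' b) hb
    obtain ⟨rfl, h2⟩ := Prod.mk.inj this
    exact h2
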